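/- Let H be a nonnegative harmonic function on the upper half-plane. If there exists a constant C > 0 such that H(x,y) ≤ C·y for all x ∈ ℝ and y > 0 (i.e. the quotient H(x,y)/y is uniformly bounded), then there exists a real number α ≥ 0 such that H(x,y) = α·y for all x ∈ ℝ and y > 0. -/

import Mathlib

/-- The open upper half-plane `𝐇² = {(x,y) : y > 0}` viewed inside `ℝ × ℝ`. -/
def UpperHalfSet : Set (ℝ × ℝ) := {p : ℝ × ℝ | 0 < p.2}

/-- `H : ℝ → ℝ → ℝ` is harmonic on the upper half-plane: it is twice continuously
differentiable there and satisfies `∂²H/∂x² + ∂²H/∂y² = 0` at every point with `y > 0`. -/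
def HarmonicOnUpperHalf (H : ℝ → ℝ → ℝ) : Prop :=
  ContDiffOn ℝ 2 (fun p : ℝ × ℝ => H p.1 p.2) UpperHalfSet ∧
  ∀ x y : ℝ, 0 < y →
    iteratedDeriv 2 (fun s => H s y) x + iteratedDeriv 2 (fun t => H x t) y = 0

open Complex Metric Filter Topology InnerProductSpace in
/-- Second derivative along a line. -/
lemma aux_second_deriv_line (f : ℂ → ℝ) (p v : ℂ) (s : ℝ) (hf : ContDiffAt ℝ 2 f (p + s • v)) :
    iteratedDeriv 2 (fun t : ℝ => f (p + t • v)) s = iteratedFDeriv ℝ 2 f (p + s • v) ![v, v] := by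
  have hγ : ∀ t : ℝ, HasDerivAt (fun t : ℝ => p + t • v) v t := by
    intro t
    simpa using ((hasDerivAt_id t).smul_const v).const_add p
  have hc : Tendsto (fun t : ℝ => p + t • v) (𝓝 s) (𝓝 (p + s • v)) := (hγ s).continuousAt
  have h1 : (deriv (fun t : ℝ => f (p + t • v))) =ᶠ[𝓝 s] fun t => fderiv ℝ f (p + t • v) v := by
    filter_upwards [hc.eventually (hf.eventually (by simp))] with t ht
    exact ((ht.differentiableAt two_ne_zero).hasFDerivAt.comp_hasDerivAt t (hγ t)).deriv
  rw [iteratedDeriv_succ, iteratedDeriv_one, h1.deriv_eq, iteratedFDeriv_two_apply]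
  have hd : DifferentiableAt ℝ (fderiv ℝ f) (p + s • v) :=
    (hf.fderiv_right (m := 1) (by norm_num)).differentiableAt one_ne_zero
  have h2 := hd.hasFDerivAt.comp_hasDerivAt s (hγ s)
  have h3 := h2.clm_apply (hasDerivAt_const s v)
  simpa using h3.deriv

open Complex Metric Filter Topology InnerProductSpace in
lemma aux_harmonic (H : ℝ → ℝ → ℝ) (hH : HarmonicOnUpperHalf H) (z : ℂ) (hz : 0 < z.re) :
    HarmonicAt (fun z : ℂ => H z.im z.re) z := by
  have hcd : ∀ z : ℂ, 0 < z.re → ContDiffAt ℝ 2 (fun z : ℂ => H z.im z.re) z := by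
    intro z hz
    have ho : IsOpen UpperHalfSet := isOpen_lt continuous_const continuous_snd
    have h1 : ContDiffAt ℝ 2 (fun p : ℝ × ℝ => H p.1 p.2) (z.im, z.re) :=
      hH.1.contDiffAt (ho.mem_nhds hz)
    have h2 : ContDiffAt ℝ 2 (fun z : ℂ => (z.im, z.re)) z :=
      (imCLM.contDiff.prodMk reCLM.contDiff).contDiffAt
    exact ContDiffAt.comp z h1 h2
  refine ⟨hcd z hz, ?_⟩
  have ho : IsOpen {z : ℂ | 0 < z.re} := isOpen_lt continuous_const continuous_re
  filter_upwards [ho.mem_nhds hz] with w hw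
  rw [laplacian_eq_iteratedFDeriv_complexPlane]
  have e1 : ((w.im : ℂ) * I) + w.re • (1 : ℂ) = w := by
    apply Complex.ext <;> simp
  have e2 : (w.re : ℂ) + w.im • I = w := by
    apply Complex.ext <;> simp
  have h1 := aux_second_deriv_line (fun z : ℂ => H z.im z.re) ((w.im : ℂ) * I) 1 w.re
    (by rw [e1]; exact hcd w hw)
  have h2 := aux_second_deriv_line (fun z : ℂ => H z.im z.re) (w.re : ℂ) I w.im
    (by rw [e2]; exact hcd w hw)
  rw [e1] at h1
  rw [e2] at h2
  have h3 := hH.2 w.im w.re hw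
  simp only [Pi.zero_apply]
  rw [← h1, ← h2, add_comm]
  simpa using h3

open Complex Metric in
/-- Holomorphic functions on the right half-plane have primitives. -/
lemma aux_primitive (F : ℂ → ℂ) (hF : ∀ z : ℂ, 0 < z.re → DifferentiableAt ℂ F z) :
    ∃ G : ℂ → ℂ, ∀ z : ℂ, 0 < z.re → HasDerivAt G (F z) z := by
  have hne : ∀ w ∈ ball (0 : ℂ) 1, (1 : ℂ) - w ≠ 0 := by
    intro w hw h
    have : w = 1 := (sub_eq_zero.mp h).symm
    simp [this] at hw
  have hd : DifferentiableOn ℂ (fun w => F ((1 + w) / (1 - w)) * (2 / (1 - w) ^ 2))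
      (ball (0 : ℂ) 1) := by
    intro w hw
    have h1 := hne w hw
    have hpos : 0 < ((1 + w) / (1 - w)).re := by
      have hn : 0 < normSq (1 - w) := normSq_pos.mpr h1
      have hw' : normSq w < 1 := by
        rw [mem_ball_zero_iff] at hw
        rw [normSq_eq_norm_sq]
        nlinarith [norm_nonneg w]
      rw [div_re, ← add_div]
      apply div_pos _ hn
      rw [normSq_apply] at hw'
      simp
      nlinarith
    apply DifferentiableAt.differentiableWithinAt
    apply DifferentiableAt.mul
    · apply DifferentiableAt.comp w (hF _ hpos)
      exact DifferentiableAt.div (by fun_prop) (by fun_prop) h1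
    · exact DifferentiableAt.div (by fun_prop) (by fun_prop) (pow_ne_zero 2 h1)
  obtain ⟨P, hP⟩ := hd.isExactOn_ball
  refine ⟨fun z => P ((z - 1) / (z + 1)), fun z hz => ?_⟩
  have hz1 : z + 1 ≠ 0 := by
    intro h
    have := congrArg re h
    simp at this
    linarith
  have hmem : (z - 1) / (z + 1) ∈ ball (0 : ℂ) 1 := by
    rw [mem_ball_zero_iff, norm_div, div_lt_one (norm_pos_iff.mpr hz1)]
    apply lt_of_pow_lt_pow_left₀ 2 (norm_nonneg _)
    rw [← normSq_eq_norm_sq, ← normSq_eq_norm_sq, normSq_apply, normSq_apply]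
    simp
    nlinarith
  have h2 : HasDerivAt (fun z : ℂ => (z - 1) / (z + 1)) (2 / (z + 1) ^ 2) z := by
    have := ((hasDerivAt_id z).sub_const 1).div ((hasDerivAt_id z).add_const 1) hz1
    refine HasDerivAt.congr_deriv this ?_
    simp only [id]
    ring
  have h3 := (hP _ hmem).comp z h2
  have e1 : 1 - (z - 1) / (z + 1) = 2 / (z + 1) := by field_simp; ring
  have e2 : (1 + (z - 1) / (z + 1)) / (1 - (z - 1) / (z + 1)) = z := by
    rw [e1]; field_simp; ring
  refine HasDerivAt.congr_deriv h3 ?_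
  simp only []
  rw [e2, e1]
  field_simp

open Complex Metric Filter Topology InnerProductSpace in
/-- A harmonic function on the right half-plane is the real part of a holomorphic function. -/
lemma aux_conjugate (f : ℂ → ℝ) (hf : ∀ z : ℂ, 0 < z.re → HarmonicAt f z) :
    ∃ G : ℂ → ℂ, (∀ z : ℂ, 0 < z.re → DifferentiableAt ℂ G z) ∧
      ∀ z : ℂ, 0 < z.re → (G z).re = f z := by
  obtain ⟨G₀, hG₀⟩ := aux_primitive (fun z ↦ fderiv ℝ f z 1 - I * fderiv ℝ f z I)
    (fun z hz => HarmonicAt.differentiableAt_complex_partial (hf z hz))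
  set S : Set ℂ := {z : ℂ | 0 < z.re} with hS
  have ho : IsOpen S := isOpen_lt continuous_const continuous_re
  have hconv : Convex ℝ S := convex_halfSpace_re_gt 0
  have hG : ∀ z : ℂ, 0 < z.re → HasDerivAt (fun w => G₀ w - G₀ 1 + f 1)
      (fderiv ℝ f z 1 - I * fderiv ℝ f z I) z := fun z hz => by
    simpa using ((hG₀ z hz).sub_const (G₀ 1)).add_const (f 1 : ℂ)
  refine ⟨fun w => G₀ w - G₀ 1 + f 1, fun z hz => (hG z hz).differentiableAt, ?_⟩
  have hR : ∀ z : ℂ, 0 < z.re → HasFDerivAt (fun w => (G₀ w - G₀ 1 + f 1).re)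
      (fderiv ℝ f z) z := by
    intro z hz
    have h1 := (hG z hz).hasFDerivAt.restrictScalars ℝ
    have h2 := reCLM.hasFDerivAt.comp z h1
    refine HasFDerivAt.congr_fderiv h2 ?_
    refine ContinuousLinearMap.ext fun a => ?_
    nth_rw 2 [(by simp : a = a.re • (1 : ℂ) + a.im • (I : ℂ))]
    rw [map_add, map_smul, map_smul]
    simp
  intro z hz
  have := hconv.eqOn_of_fderivWithin_eq (𝕜 := ℝ) (x := 1)
    (f := fun w => (G₀ w - G₀ 1 + f 1).re) (g := f)
    (fun y hy => (hR y hy).differentiableAt.differentiableWithinAt)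
    (fun y hy => ((hf y hy).1.differentiableAt two_ne_zero).differentiableWithinAt)
    ho.uniqueDiffOn
    (fun y hy => by
      rw [fderivWithin_of_isOpen ho hy, fderivWithin_of_isOpen ho hy, (hR y hy).fderiv])
    (by simp [hS]) (by simp)
  exact this hz

open Complex Metric in
/-- Horizontal differences are bounded. -/
lemma aux_bound (G : ℂ → ℂ) (hG : ∀ z : ℂ, 0 < z.re → DifferentiableAt ℂ G z)
    (h0 : ∀ z : ℂ, 0 < z.re → 0 ≤ (G z).re) (C : ℝ) (hC : 0 < C)
    (h1 : ∀ z : ℂ, 0 < z.re → (G z).re ≤ C * z.re) (h : ℝ) (z : ℂ) (hz : 0 < z.re) :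
    (G (z + h * I) - G z).re ≤ 8 * C * |h| := by
  have habs := abs_nonneg h
  rcases lt_or_ge (2 * |h|) z.re with hlt | hge
  · have hpos : ∀ w ∈ ball (0 : ℂ) z.re, 0 < (z + w).re ∧ (z + w).re ≤ 2 * z.re := by
      intro w hw
      rw [mem_ball_zero_iff] at hw
      have := abs_le.mp (abs_re_le_norm w)
      simp only [add_re]
      constructor <;> linarith [this.1, this.2]
    have hb := borelCaratheodory_zero (f := fun w => G (z + w) - G z) (M := 2 * C * z.re)
      (R := z.re) (z := h * I) (by positivity)
      (by
        intro w hw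
        apply DifferentiableAt.differentiableWithinAt
        apply DifferentiableAt.sub_const
        exact DifferentiableAt.comp w (hG _ (hpos w hw).1) (by fun_prop))
      (by
        intro w hw
        have a1 := h1 _ (hpos w hw).1
        have a2 := h0 z hz
        have a3 := mul_le_mul_of_nonneg_left (hpos w hw).2 hC.le
        show (G (z + w) - G z).re ≤ _
        rw [sub_re]
        linarith)
      hz (by simp; linarith) (by simp)
    have hn : ‖(h : ℂ) * I‖ = |h| := by simp
    rw [hn] at hb
    refine (re_le_norm _).trans (hb.trans ?_)
    rw [div_le_iff₀ (by linarith)]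
    nlinarith [mul_nonneg hC.le habs]
  · have a1 := h1 (z + h * I) (by simpa using hz)
    have a2 := h0 z hz
    rw [sub_re]
    simp at a1
    nlinarith [mul_nonneg hC.le habs]

open Complex Metric Filter Topology Asymptotics in
lemma aux_le (G : ℂ → ℂ) (hG : ∀ z : ℂ, 0 < z.re → DifferentiableAt ℂ G z)
    (h0 : ∀ z : ℂ, 0 < z.re → 0 ≤ (G z).re) (C : ℝ) (hC : 0 < C)
    (h1 : ∀ z : ℂ, 0 < z.re → (G z).re ≤ C * z.re) (h : ℝ) (z : ℂ) (hz : 0 < z.re) :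
    (G (z + h * I)).re ≤ (G z).re := by
  have key : ∀ ε : ℝ, 0 < ε → ε < z.re → (G (z + h * I) - G z).re ≤ C * ε := by
    intro ε hε hεz
    set e : ℂ → ℂ := fun w => Complex.exp (G (w + ε + h * I) - G (w + ε)) with he
    have hre : ∀ w : ℂ, 0 ≤ w.re → 0 < (w + ε).re := by
      intro w hw; simp; linarith
    have hde : ∀ w : ℂ, 0 ≤ w.re → DifferentiableAt ℂ e w := by
      intro w hw
      apply DifferentiableAt.cexp
      apply DifferentiableAt.sub
      · exact DifferentiableAt.comp w (hG _ (by simpa using hre w hw)) (by fun_prop)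
      · exact DifferentiableAt.comp w (hG _ (hre w hw)) (by fun_prop)
    have hbe : ∀ w : ℂ, 0 ≤ w.re → ‖e w‖ ≤ Real.exp (8 * C * |h|) := by
      intro w hw
      rw [he, norm_exp]
      exact Real.exp_le_exp.mpr (aux_bound G hG h0 C hC h1 h _ (hre w hw))
    have hPL := PhragmenLindelof.right_half_plane_of_bounded_on_real (f := e)
      (C := Real.exp (C * ε)) (z := z - ε)
      (by
        apply DifferentiableOn.diffContOnCl
        rw [closure_setOfPred_lt_re]
        exact fun w hw => (hde w hw).differentiableWithinAt)
      ⟨0, by norm_num, 0, by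
        apply IsBigO.of_bound (Real.exp (8 * C * |h|))
        refine eventually_inf_principal.mpr (Eventually.of_forall fun w hw => ?_)
        simpa using hbe w (le_of_lt hw)⟩
      (by
        refine ⟨Real.exp (8 * C * |h|), ?_⟩
        rw [eventually_map]
        filter_upwards [eventually_ge_atTop 0] with x hx
        exact hbe x (by simpa using hx))
      (by
        intro x
        rw [he, norm_exp]
        apply Real.exp_le_exp.mpr
        have a1 := h1 ((x : ℂ) * I + ε + h * I) (by simpa using hε)
        have a2 := h0 ((x : ℂ) * I + ε) (by simpa using hε)
        rw [sub_re]
        simp at a1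
        linarith)
      (by simp; linarith)
    rw [he, norm_exp] at hPL
    simpa using Real.exp_le_exp.mp hPL
  have hlim : Tendsto (fun ε : ℝ => C * ε) (𝓝[>] 0) (𝓝 0) := by
    have : Tendsto (fun ε : ℝ => C * ε) (𝓝 0) (𝓝 (C * 0)) := (continuous_const_mul C).tendsto 0
    rw [mul_zero] at this
    exact this.mono_left nhdsWithin_le_nhds
  have : (G (z + h * I) - G z).re ≤ 0 := by
    apply ge_of_tendsto hlim
    filter_upwards [Ioo_mem_nhdsGT hz] with ε hε
    exact key ε hε.1 hε.2
  rw [sub_re] at this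
  linarith

/-- **Lemma 4.1.** A nonnegative harmonic function `H` on the upper half-plane such that
`H(x,y) ≤ C·y` for some constant `C > 0` is of the form `H(x,y) = α·y` for some `α ≥ 0`. -/
theorem nonneg_harmonic_bounded_by_y_eq_mul_y
    (H : ℝ → ℝ → ℝ) (hH : HarmonicOnUpperHalf H)
    (hnonneg : ∀ x y : ℝ, 0 < y → 0 ≤ H x y)
    (C : ℝ) (hC : 0 < C) (hbd : ∀ x y : ℝ, 0 < y → H x y ≤ C * y) :
    ∃ α : ℝ, 0 ≤ α ∧ ∀ x y : ℝ, 0 < y → H x y = α * y := by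
  obtain ⟨G, hG, hGf⟩ := aux_conjugate (fun z : ℂ => H z.im z.re) (aux_harmonic H hH)
  have hle : ∀ x h y : ℝ, 0 < y → H (x + h) y ≤ H x y := by
    intro x h y hy
    have := aux_le G hG (fun z hz => by rw [hGf z hz]; exact hnonneg _ _ hz) C hC
      (fun z hz => by rw [hGf z hz]; exact hbd _ _ hz) h ⟨y, x⟩ hy
    rw [hGf _ (by simpa using hy), hGf _ hy] at this
    simpa using this
  have heq : ∀ x y : ℝ, 0 < y → H x y = H 0 y := by
    intro x y hy
    apply le_antisymm
    · simpa using hle 0 x y hy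
    · simpa using hle x (-x) y hy
  have hcd : ContDiffOn ℝ 2 (fun t => H 0 t) (Set.Ioi 0) :=
    hH.1.comp (f := fun t : ℝ => ((0 : ℝ), t)) (by fun_prop) (fun t ht => ht)
  have hdiff : DifferentiableOn ℝ (fun t => H 0 t) (Set.Ioi 0) :=
    hcd.differentiableOn two_ne_zero
  have hcd1 : DifferentiableOn ℝ (deriv (fun t => H 0 t)) (Set.Ioi 0) :=
    (hcd.deriv_of_isOpen (m := 1) isOpen_Ioi (by norm_num)).differentiableOn one_ne_zero
  have h2 : ∀ y : ℝ, 0 < y → deriv (deriv (fun t => H 0 t)) y = 0 := by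
    intro y hy
    have h3 := hH.2 0 y hy
    have h4 : (fun s => H s y) = fun _ => H 0 y := funext fun s => heq s y hy
    rw [h4] at h3
    simpa [iteratedDeriv_succ, iteratedDeriv_one] using h3
  obtain ⟨a, ha⟩ := isOpen_Ioi.exists_is_const_of_deriv_eq_zero isPreconnected_Ioi hcd1
    (fun y hy => h2 y hy)
  have hlin : ∀ y : ℝ, 0 < y → HasDerivAt (fun t => H 0 t - a * t) 0 y := by
    intro y hy
    have h5 := ((hdiff y hy).differentiableAt (Ioi_mem_nhds hy)).hasDerivAt
    rw [ha y hy] at h5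
    have h8 := h5.sub ((hasDerivAt_id y).const_mul a)
    exact HasDerivAt.congr_deriv h8 (by simp)
  obtain ⟨b, hb⟩ := isOpen_Ioi.exists_is_const_of_deriv_eq_zero (isPreconnected_Ioi (a := (0 : ℝ)))
    (fun y hy => (hlin y hy).differentiableAt.differentiableWithinAt)
    (fun y hy => (hlin y hy).deriv)
  have hab : ∀ y : ℝ, 0 < y → H 0 y = a * y + b := by
    intro y hy
    have := hb y hy
    linarith
  have hb0 : b = 0 := by
    have hb1 : Filter.Tendsto (fun y : ℝ => a * y + b) (nhdsWithin 0 (Set.Ioi 0)) (nhds b) := by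
      have : ContinuousAt (fun y : ℝ => a * y + b) 0 := by fun_prop
      have h6 := this.tendsto
      simp only [mul_zero, zero_add] at h6
      exact h6.mono_left nhdsWithin_le_nhds
    have hb2 : Filter.Tendsto (fun y : ℝ => C * y) (nhdsWithin 0 (Set.Ioi 0)) (nhds 0) := by
      have : ContinuousAt (fun y : ℝ => C * y) 0 := by fun_prop
      have h6 := this.tendsto
      simp only [mul_zero] at h6
      exact h6.mono_left nhdsWithin_le_nhds
    apply le_antisymm
    · apply le_of_tendsto_of_tendsto hb1 hb2
      filter_upwards [self_mem_nhdsWithin] with y hy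
      rw [← hab y hy]
      exact hbd 0 y hy
    · apply ge_of_tendsto hb1
      filter_upwards [self_mem_nhdsWithin] with y hy
      rw [← hab y hy]
      exact hnonneg 0 y hy
  refine ⟨a, ?_, fun x y hy => ?_⟩
  · have := hab 1 one_pos
    have h7 := hnonneg 0 1 one_pos
    linarith
  · rw [heq x y hy, hab y hy, hb0, add_zero]
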